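/- arXiv:2211.01883 — 3 statements merged into one kernel-verified Lean document; each statement's English description precedes it below -/
import Mathlib

section
/- Gradient-estimation error bound (Lemma 2). Let x̄ ∈ ℝ^d, and for each m ∈ {1,…,M} let u^m ∈ ℝ^{p×d} with Frobenius norm ‖u^m‖ ≤ C_g, v^m ∈ ℝ^p with ‖v^m‖ ≤ C_f, and h^m ∈ ℝ^p. Set w̄ = (1/M)∑_{m=1}^M (u^m)ᵀ v^m. Then ‖w̄ − ∇F(x̄)‖² ≤ (1/M)∑_{m=1}^M ( 2C_f²‖u^m − ∇g^m(x̄)‖² + 4C_g²‖v^m − ∇f^m(h^m)‖² + 4C_g²L_f²‖h^m − g^m(x̄)‖² ). -/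
open Matrix

noncomputable section

/-- Frobenius norm of a real matrix. -/
def frobNorm {p d : ℕ} (A : Matrix (Fin p) (Fin d) ℝ) : ℝ :=
  Real.sqrt (∑ i, ∑ j, A i j ^ 2)

/-- Apply a real matrix to a Euclidean vector. -/
def mApply {p d : ℕ} (A : Matrix (Fin p) (Fin d) ℝ)
    (v : EuclideanSpace ℝ (Fin d)) : EuclideanSpace ℝ (Fin p) :=
  (WithLp.equiv 2 (Fin p → ℝ)).symm (A.mulVec (WithLp.equiv 2 (Fin d → ℝ) v))

/-!
Split `(uᵐ)ᵀ vᵐ - (∇gᵐ)ᵀ ∇fᵐ(gᵐ) = (uᵐ - ∇gᵐ)ᵀ vᵐ + (∇gᵐ)ᵀ (vᵐ - ∇fᵐ(gᵐ))`, and split the second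
difference again through `∇fᵐ(hᵐ)`. Applying `(a + b)² ≤ 2a² + 2b²` at both splittings produces the
constants `2, 4, 4`, and convexity of `‖·‖²` passes the bound from the summands to their average.
Only operator norms of the Jacobians enter, so the argument lives in arbitrary Hilbert spaces; it
specializes to matrices because the operator norm is at most the Frobenius norm.
-/

theorem norm_apply_sub_apply_sq_le {𝕜 E F : Type*} [NontriviallyNormedField 𝕜]
    [SeminormedAddCommGroup E] [NormedSpace 𝕜 E] [SeminormedAddCommGroup F] [NormedSpace 𝕜 F]
    (A B : E →L[𝕜] F) (x y z : E) :
    ‖A x - B z‖ ^ 2 ≤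
      2 * ‖x‖ ^ 2 * ‖A - B‖ ^ 2 + 4 * ‖B‖ ^ 2 * ‖x - y‖ ^ 2 + 4 * ‖B‖ ^ 2 * ‖y - z‖ ^ 2 := by
  have split : A x - B z = (A - B) x + B (x - z) := by
    rw [_root_.sub_apply, map_sub]; abel
  calc ‖A x - B z‖ ^ 2
      ≤ (‖A - B‖ * ‖x‖ + ‖B‖ * ‖x - z‖) ^ 2 := by
        rw [split]; gcongr; exact norm_add_le_of_le ((A - B).le_opNorm x) (B.le_opNorm _)
    _ ≤ 2 * ((‖A - B‖ * ‖x‖) ^ 2 + (‖B‖ * ‖x - z‖) ^ 2) := add_sq_le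
    _ = 2 * ‖x‖ ^ 2 * ‖A - B‖ ^ 2 + 2 * ‖B‖ ^ 2 * ‖x - z‖ ^ 2 := by ring
    _ ≤ 2 * ‖x‖ ^ 2 * ‖A - B‖ ^ 2 + 2 * ‖B‖ ^ 2 * (2 * (‖x - y‖ ^ 2 + ‖y - z‖ ^ 2)) := by
        gcongr
        exact (pow_le_pow_left₀ (norm_nonneg _) (norm_sub_le_norm_sub_add_norm_sub x y z) 2).trans
          add_sq_le
    _ = _ := by ring

theorem norm_sum_smul_sq_le {ι E : Type*} [SeminormedAddCommGroup E] [NormedSpace ℝ E]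
    {s : Finset ι} {w : ι → ℝ} (hw₀ : ∀ i ∈ s, 0 ≤ w i) (hw₁ : ∑ i ∈ s, w i = 1) (x : ι → E) :
    ‖∑ i ∈ s, w i • x i‖ ^ 2 ≤ ∑ i ∈ s, w i * ‖x i‖ ^ 2 :=
  (convexOn_univ_norm.pow (fun _ _ => norm_nonneg _) 2).map_sum_le hw₀ hw₁ fun _ _ => Set.mem_univ _

section Gradient

variable {E F : Type*} [NormedAddCommGroup E] [CompleteSpace E] [NormedAddCommGroup F]
  [CompleteSpace F]

theorem hasGradientAt_comp {𝕜 : Type*} [RCLike 𝕜] [InnerProductSpace 𝕜 E] [InnerProductSpace 𝕜 F]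
    {f : F → 𝕜} {g : E → F} {x : E} {f' : F} {g' : E →L[𝕜] F}
    (hf : HasGradientAt f f' (g x)) (hg : HasFDerivAt g g' x) :
    HasGradientAt (fun x => f (g x)) (g'.adjoint f') x := by
  have dual_adjoint : InnerProductSpace.toDual 𝕜 E (g'.adjoint f') =
      (InnerProductSpace.toDual 𝕜 F f').comp g' := by
    ext y
    simp [ContinuousLinearMap.adjoint_inner_left]
  rw [hasGradientAt_iff_hasFDerivAt, dual_adjoint]
  exact hf.hasFDerivAt.comp x hg

theorem hasGradientAt_sum_mul {ι : Type*} [InnerProductSpace ℝ E] {s : Finset ι} (w : ι → ℝ)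
    {f : ι → E → ℝ} {f' : ι → E} {x : E} (hf : ∀ i ∈ s, HasGradientAt (f i) (f' i) x) :
    HasGradientAt (fun x => ∑ i ∈ s, w i * f i x) (∑ i ∈ s, w i • f' i) x := by
  rw [hasGradientAt_iff_hasFDerivAt]
  simpa using HasFDerivAt.fun_sum fun i hi => (hf i hi).hasFDerivAt.const_mul (w i)

variable {ι : Type*} [Fintype ι] [InnerProductSpace ℝ E] [InnerProductSpace ℝ F]

theorem gradient_sum_mul_comp (w : ι → ℝ) {f : ι → F → ℝ} {g : ι → E → F} {x : E} {f' : ι → F}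
    {g' : ι → E →L[ℝ] F} (hf : ∀ i, HasGradientAt (f i) (f' i) (g i x))
    (hg : ∀ i, HasFDerivAt (g i) (g' i) x) :
    gradient (fun x => ∑ i, w i * f i (g i x)) x = ∑ i, w i • (g' i).adjoint (f' i) :=
  (hasGradientAt_sum_mul w fun i _ => hasGradientAt_comp (hf i) (hg i)).gradient

theorem gradient_estimation_error_bound_general {w : ι → ℝ} (hw₀ : ∀ i, 0 ≤ w i)
    (hw₁ : ∑ i, w i = 1) {f : ι → F → ℝ} {g : ι → E → F} {x : E} {f' : ι → F → F}
    {g' : ι → E →L[ℝ] F} {Lf Cg Cf : ℝ} (hf : ∀ i y, HasGradientAt (f i) (f' i y) y)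
    (hg : ∀ i, HasFDerivAt (g i) (g' i) x)
    (hfLip : ∀ i y, ‖f' i y - f' i (g i x)‖ ≤ Lf * ‖y - g i x‖) (hgBound : ∀ i, ‖g' i‖ ≤ Cg)
    (u : ι → E →L[ℝ] F) {v : ι → F} (h : ι → F) (hv : ∀ i, ‖v i‖ ≤ Cf) :
    ‖∑ i, w i • (u i).adjoint (v i) - gradient (fun x => ∑ i, w i * f i (g i x)) x‖ ^ 2 ≤
      ∑ i, w i * (2 * Cf ^ 2 * ‖u i - g' i‖ ^ 2 + 4 * Cg ^ 2 * ‖v i - f' i (h i)‖ ^ 2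
        + 4 * Cg ^ 2 * Lf ^ 2 * ‖h i - g i x‖ ^ 2) := by
  have summand_le (i : ι) : ‖(u i).adjoint (v i) - (g' i).adjoint (f' i (g i x))‖ ^ 2 ≤
      2 * Cf ^ 2 * ‖u i - g' i‖ ^ 2 + 4 * Cg ^ 2 * ‖v i - f' i (h i)‖ ^ 2
        + 4 * Cg ^ 2 * Lf ^ 2 * ‖h i - g i x‖ ^ 2 := by
    refine (norm_apply_sub_apply_sq_le _ _ _ (f' i (h i)) _).trans ?_
    rw [← map_sub, LinearIsometryEquiv.norm_map, LinearIsometryEquiv.norm_map,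
      mul_assoc (4 * Cg ^ 2), ← mul_pow Lf]
    gcongr
    exacts [hv i, hgBound i, hgBound i, hfLip i (h i)]
  calc ‖∑ i, w i • (u i).adjoint (v i) - gradient (fun x => ∑ i, w i * f i (g i x)) x‖ ^ 2
      = ‖∑ i, w i • ((u i).adjoint (v i) - (g' i).adjoint (f' i (g i x)))‖ ^ 2 := by
        rw [gradient_sum_mul_comp w (fun i => hf i (g i x)) hg, ← Finset.sum_sub_distrib]
        simp only [smul_sub]
    _ ≤ ∑ i, w i * ‖(u i).adjoint (v i) - (g' i).adjoint (f' i (g i x))‖ ^ 2 :=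
        norm_sum_smul_sq_le (fun i _ => hw₀ i) hw₁ _
    _ ≤ _ := Finset.sum_le_sum fun i _ => mul_le_mul_of_nonneg_left (summand_le i) (hw₀ i)

end Gradient

section Frobenius

open scoped Matrix.Norms.Frobenius

theorem opNorm_toEuclideanLin_le_frobenius_norm {𝕜 m n : Type*} [RCLike 𝕜] [Fintype m] [Fintype n]
    [DecidableEq n] (A : Matrix m n 𝕜) :
    ‖(Matrix.toEuclideanLin A).toContinuousLinearMap‖ ≤ ‖A‖ := by
  refine ContinuousLinearMap.opNorm_le_bound _ (norm_nonneg A) fun v => ?_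
  have norm_mul_col := frobenius_norm_mul A (replicateCol Unit v.ofLp)
  rwa [← replicateCol_mulVec, frobenius_norm_replicateCol, frobenius_norm_replicateCol]
    at norm_mul_col

theorem frobNorm_eq_frobenius_norm {p d : ℕ} (A : Matrix (Fin p) (Fin d) ℝ) :
    frobNorm A = ‖A‖ := by
  simp [frobNorm, frobenius_norm_def, Real.sqrt_eq_rpow]

theorem opNorm_toEuclideanLin_le_frobNorm {p d : ℕ} (A : Matrix (Fin p) (Fin d) ℝ) :
    ‖(Matrix.toEuclideanLin A).toContinuousLinearMap‖ ≤ frobNorm A :=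
  (opNorm_toEuclideanLin_le_frobenius_norm A).trans_eq (frobNorm_eq_frobenius_norm A).symm

end Frobenius

theorem mApply_transpose_eq_adjoint {p d : ℕ} (A : Matrix (Fin p) (Fin d) ℝ)
    (v : EuclideanSpace ℝ (Fin p)) :
    mApply Aᵀ v = (Matrix.toEuclideanLin A).toContinuousLinearMap.adjoint v := by
  rw [← LinearMap.adjoint_toContinuousLinearMap, ← Matrix.toEuclideanLin_conjTranspose_eq_adjoint,
    conjTranspose_eq_transpose_of_trivial]
  rfl

/-- **Lemma 2 (gradient-estimation error bound).**
For matrices `uᵐ` with Frobenius norm at most `Cg`, vectors `vᵐ` with `‖vᵐ‖ ≤ Cf` and vectors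
`hᵐ`, the average `w̄ = (1/M)∑ₘ (uᵐ)ᵀvᵐ` satisfies
`‖w̄ − ∇F(x̄)‖² ≤ (1/M)∑ₘ (2Cf²‖uᵐ − ∇gᵐ(x̄)‖² + 4Cg²‖vᵐ − ∇fᵐ(hᵐ)‖² + 4Cg²Lf²‖hᵐ − gᵐ(x̄)‖²)`,
where `∇F(x̄) = (1/M)∑ₘ (∇gᵐ(x̄))ᵀ∇fᵐ(gᵐ(x̄))`. -/
theorem gradient_estimation_error_bound
    {d p M : ℕ} (hM : 0 < M)
    (g : Fin M → EuclideanSpace ℝ (Fin d) → EuclideanSpace ℝ (Fin p))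
    (f : Fin M → EuclideanSpace ℝ (Fin p) → ℝ)
    (Dg : Fin M → EuclideanSpace ℝ (Fin d) → Matrix (Fin p) (Fin d) ℝ)
    (df : Fin M → EuclideanSpace ℝ (Fin p) → EuclideanSpace ℝ (Fin p))
    (Lf Cg Cf : ℝ)
    (hgDeriv : ∀ m x, HasFDerivAt (g m)
      ((Matrix.toEuclideanLin (Dg m x)).toContinuousLinearMap) x)
    (hfDeriv : ∀ m y, HasGradientAt (f m) (df m y) y)
    (hfLip : ∀ m y₁ y₂, ‖df m y₁ - df m y₂‖ ≤ Lf * ‖y₁ - y₂‖)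
    (hgBound : ∀ m x, frobNorm (Dg m x) ≤ Cg)
    (hfBound : ∀ m y, ‖df m y‖ ≤ Cf)
    (xbar : EuclideanSpace ℝ (Fin d))
    (u : Fin M → Matrix (Fin p) (Fin d) ℝ)
    (v : Fin M → EuclideanSpace ℝ (Fin p))
    (h : Fin M → EuclideanSpace ℝ (Fin p))
    (hu : ∀ m, frobNorm (u m) ≤ Cg)
    (hv : ∀ m, ‖v m‖ ≤ Cf) :
    ‖((M : ℝ)⁻¹ • ∑ m, mApply (u m)ᵀ (v m)) -
        ((M : ℝ)⁻¹ • ∑ m, mApply (Dg m xbar)ᵀ (df m (g m xbar)))‖ ^ 2 ≤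
      (M : ℝ)⁻¹ * ∑ m,
        (2 * Cf ^ 2 * frobNorm (u m - Dg m xbar) ^ 2
          + 4 * Cg ^ 2 * ‖v m - df m (h m)‖ ^ 2
          + 4 * Cg ^ 2 * Lf ^ 2 * ‖h m - g m xbar‖ ^ 2) := by
  have hw₁ : ∑ _m : Fin M, (M : ℝ)⁻¹ = 1 := by simp [hM.ne']
  have key := gradient_estimation_error_bound_general (fun _ => by positivity) hw₁ hfDeriv
    (fun m => hgDeriv m xbar) (fun m y => hfLip m y _)
    (fun m => (opNorm_toEuclideanLin_le_frobNorm _).trans (hgBound m xbar))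
    (fun m => (Matrix.toEuclideanLin (u m)).toContinuousLinearMap) h hv
  rw [gradient_sum_mul_comp _ (fun m => hfDeriv m _) (fun m => hgDeriv m xbar)] at key
  simp only [mApply_transpose_eq_adjoint, Finset.smul_sum, Finset.mul_sum]
  refine key.trans ?_
  gcongr with m
  rw [← map_sub, ← map_sub]
  exact opNorm_toEuclideanLin_le_frobNorm _
end
end

section
/- One-step descent of the adaptive preconditioned update. Let F : ℝ^d → ℝ be differentiable with L-Lipschitz gradient, let A be a symmetric positive definite d×d real matrix with A ⪰ ρI_d for some ρ > 0, let w ∈ ℝ^d, and let η, γ > 0 satisfy γ ≤ ρ/(2Lη). Define x⁺ = x − γη A^{-1} w (equivalently x⁺ = argmin_z {⟨w, z⟩ + (1/(2ηγ))(z−x)ᵀA(z−x)}). Then F(x⁺) ≤ F(x) + (ηγ/ρ)‖∇F(x) − w‖² − (ρ/(2ηγ))‖x⁺ − x‖². -/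
open Matrix

noncomputable section

/-!
Write `v = x⁺ - x = -τ A⁻¹ w` with `τ = γη`. The descent lemma gives
`F x⁺ ≤ F x + ⟪∇F x - w, v⟫ + ⟪w, v⟫ + L / 2 * ‖v‖²`. Coercivity of `A` makes `⟪w, v⟫` at most
`-(ρ / τ) ‖v‖²`. Young's inequality and the step-size restriction each give back at most
`ρ / (4τ) ‖v‖²` of this decrease, and Young leaves the error term `(τ / ρ) ‖∇F x - w‖²`.
-/

section DescentLemma

open AffineMap Set

variable {E G : Type*} [NormedAddCommGroup E] [NormedSpace ℝ E] [NormedAddCommGroup G]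
  [NormedSpace ℝ G]

theorem norm_image_sub_sub_le_of_norm_hasFDerivWithinAt_sub_le {f : E → G} {f' : E → E →L[ℝ] G}
    {x y : E} {L : ℝ} (hf : ∀ z ∈ segment ℝ x y, HasFDerivWithinAt f (f' z) (segment ℝ x y) z)
    (hL : ∀ z ∈ segment ℝ x y, ‖f' z - f' x‖ ≤ L * ‖z - x‖) :
    ‖f y - f x - f' x (y - x)‖ ≤ L / 2 * ‖y - x‖ ^ 2 := by
  set ℓ : ℝ → E := ⇑(lineMap x y : ℝ →ᵃ[ℝ] E)
  have hℓ : MapsTo ℓ (Icc 0 1) (segment ℝ x y) := fun t ht ↦ by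
    rw [segment_eq_image_lineMap]
    exact mem_image_of_mem _ ht
  have hderiv : ∀ t ∈ Icc (0 : ℝ) 1,
      HasDerivWithinAt (fun t ↦ f (ℓ t) - f x - t • f' x (y - x))
        ((f' (ℓ t) - f' x) (y - x)) (Icc 0 1) t := fun t ht ↦ by
    simpa using (((hf _ (hℓ ht)).comp_hasDerivWithinAt t
      hasDerivWithinAt_lineMap hℓ).sub_const (f x)).fun_sub
      ((hasDerivWithinAt_id t (Icc 0 1)).smul_const (f' x (y - x)))
  have hbound : ∀ t ∈ Ico (0 : ℝ) 1,
      ‖(f' (ℓ t) - f' x) (y - x)‖ ≤ L / 2 * ‖y - x‖ ^ 2 * (2 * t) := fun t ht ↦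
    calc ‖(f' (ℓ t) - f' x) (y - x)‖
      _ ≤ ‖f' (ℓ t) - f' x‖ * ‖y - x‖ := ContinuousLinearMap.le_opNorm _ _
      _ ≤ L * ‖ℓ t - x‖ * ‖y - x‖ := by gcongr; exact hL _ (hℓ (Ico_subset_Icc_self ht))
      _ = L / 2 * ‖y - x‖ ^ 2 * (2 * t) := by
        rw [← dist_eq_norm (ℓ t), dist_lineMap_left, dist_eq_norm', Real.norm_of_nonneg ht.1]
        ring
  have hboundary (t : ℝ) :
      HasDerivAt (fun t ↦ L / 2 * ‖y - x‖ ^ 2 * t ^ 2) (L / 2 * ‖y - x‖ ^ 2 * (2 * t)) t := by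
    simpa using (hasDerivAt_pow 2 t).const_mul (L / 2 * ‖y - x‖ ^ 2)
  have h := image_norm_le_of_norm_deriv_right_le_deriv_boundary
    (fun t ht ↦ (hderiv t ht).continuousWithinAt)
    (fun t ht ↦ (hderiv t (Ico_subset_Icc_self ht)).mono_of_mem_nhdsWithin
      (Icc_mem_nhdsGE_of_mem ht))
    (by simp [ℓ]) hboundary hbound (right_mem_Icc.2 zero_le_one)
  simpa [ℓ] using h

end DescentLemma

section Hilbert

open scoped RealInnerProductSpace

theorem real_inner_le_mul_norm_sq_add_norm_sq_div {E : Type*} [SeminormedAddCommGroup E]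
    [InnerProductSpace ℝ E] {c : ℝ} (hc : 0 < c) (a b : E) :
    ⟪a, b⟫ ≤ c * ‖a‖ ^ 2 + ‖b‖ ^ 2 / (4 * c) := by
  have hsq : 0 ≤ (2 * c * ‖a‖ - ‖b‖) ^ 2 / (4 * c) := by positivity
  calc ⟪a, b⟫
    _ ≤ ‖a‖ * ‖b‖ := real_inner_le_norm a b
    _ = c * ‖a‖ ^ 2 + ‖b‖ ^ 2 / (4 * c) - (2 * c * ‖a‖ - ‖b‖) ^ 2 / (4 * c) := by
      field_simp
      ring
    _ ≤ c * ‖a‖ ^ 2 + ‖b‖ ^ 2 / (4 * c) := sub_le_self _ hsq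

variable {E : Type*} [NormedAddCommGroup E] [InnerProductSpace ℝ E] [CompleteSpace E]
  {F : E → ℝ} {g : E → E} {L : ℝ}

theorem image_le_add_inner_add_of_norm_hasGradientWithinAt_sub_le {x y : E}
    (hF : ∀ z ∈ segment ℝ x y, HasGradientWithinAt F (g z) (segment ℝ x y) z)
    (hL : ∀ z ∈ segment ℝ x y, ‖g z - g x‖ ≤ L * ‖z - x‖) :
    F y ≤ F x + ⟪g x, y - x⟫ + L / 2 * ‖y - x‖ ^ 2 := by
  have h := norm_image_sub_sub_le_of_norm_hasFDerivWithinAt_sub_le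
    (fun z hz ↦ (hF z hz).hasFDerivWithinAt)
    (fun z hz ↦ by rw [← map_sub, LinearIsometryEquiv.norm_map]; exact hL z hz)
  rw [InnerProductSpace.toDual_apply_apply] at h
  linarith [Real.le_norm_self (F y - F x - ⟪g x, y - x⟫)]

/-- Here `τ` stands for `γη` and `u` for the preconditioned direction `A⁻¹ w`. -/
theorem one_step_descent_adaptive_general {ρ τ : ℝ} {x u w : E} (hρ : 0 < ρ) (hτ : 0 < τ)
    (hstep : 2 * L * τ ≤ ρ)
    (hF : ∀ z ∈ segment ℝ x (x - τ • u),
      HasGradientWithinAt F (g z) (segment ℝ x (x - τ • u)) z)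
    (hL : ∀ z ∈ segment ℝ x (x - τ • u), ‖g z - g x‖ ≤ L * ‖z - x‖)
    (hu : ρ * ‖u‖ ^ 2 ≤ ⟪w, u⟫) :
    F (x - τ • u) ≤
      F x + τ / ρ * ‖g x - w‖ ^ 2 - ρ / (2 * τ) * ‖x - τ • u - x‖ ^ 2 := by
  have hdescent := image_le_add_inner_add_of_norm_hasGradientWithinAt_sub_le hF hL
  have hv : x - τ • u - x = -(τ • u) := sub_sub_cancel_left x (τ • u)
  set v := x - τ • u - x
  have hsplit : ⟪g x, v⟫ = ⟪g x - w, v⟫ + ⟪w, v⟫ := by rw [inner_sub_left, sub_add_cancel]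
  have hyoung : ⟪g x - w, v⟫ ≤ τ / ρ * ‖g x - w‖ ^ 2 + ‖v‖ ^ 2 / (4 * (τ / ρ)) :=
    real_inner_le_mul_norm_sq_add_norm_sq_div (div_pos hτ hρ) _ _
  have hcoercive : ⟪w, v⟫ ≤ -(ρ / τ * ‖v‖ ^ 2) :=
    calc ⟪w, v⟫
      _ = -(τ * ⟪w, u⟫) := by rw [hv, inner_neg_right, real_inner_smul_right]
      _ ≤ -(τ * (ρ * ‖u‖ ^ 2)) := by gcongr
      _ = -(ρ / τ * ‖v‖ ^ 2) := by
        rw [hv, norm_neg, norm_smul, Real.norm_of_nonneg hτ.le]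
        field_simp
  have hsmooth : L / 2 * ‖v‖ ^ 2 ≤ ρ / (4 * τ) * ‖v‖ ^ 2 := by
    refine mul_le_mul_of_nonneg_right ?_ (sq_nonneg _)
    rw [le_div_iff₀ (by positivity)]
    linarith
  calc F (x - τ • u)
    _ ≤ F x + (τ / ρ * ‖g x - w‖ ^ 2 + ‖v‖ ^ 2 / (4 * (τ / ρ)) - ρ / τ * ‖v‖ ^ 2)
          + ρ / (4 * τ) * ‖v‖ ^ 2 := by linarith
    _ = F x + τ / ρ * ‖g x - w‖ ^ 2 - ρ / (2 * τ) * ‖v‖ ^ 2 := by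
      field_simp
      ring

end Hilbert

section Matrix

open scoped MatrixOrder InnerProductSpace

variable {n 𝕜 : Type*} [Fintype n] [DecidableEq n] [RCLike 𝕜] {A : Matrix n n 𝕜} {ρ : ℝ}

theorem algebraMap_le_of_le_eigenvalues (hA : A.IsHermitian) (hρ : ∀ i, ρ ≤ hA.eigenvalues i) :
    algebraMap ℝ (Matrix n n 𝕜) ρ ≤ A := by
  rw [algebraMap_le_iff_le_spectrum hA.isSelfAdjoint, hA.spectrum_real_eq_range_eigenvalues]
  exact Set.forall_mem_range.2 hρ

theorem mul_norm_sq_le_re_inner_of_algebraMap_le (h : algebraMap ℝ (Matrix n n 𝕜) ρ ≤ A)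
    (u : EuclideanSpace 𝕜 n) : ρ * ‖u‖ ^ 2 ≤ RCLike.re ⟪toEuclideanLin A u, u⟫_𝕜 := by
  have hpos := (isPositive_toEuclideanLin_iff.2 (le_iff.1 h)).re_inner_nonneg_left u
  have hscalar : toEuclideanLin (algebraMap ℝ (Matrix n n 𝕜) ρ) u = (ρ : 𝕜) • u := by
    rw [Algebra.algebraMap_eq_smul_one]
    ext i
    simp [smul_mulVec, RCLike.real_smul_eq_coe_mul]
  rw [map_sub, LinearMap.sub_apply, inner_sub_left, map_sub, hscalar, inner_smul_left,
    RCLike.conj_ofReal, RCLike.re_ofReal_mul, inner_self_eq_norm_sq] at hpos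
  exact sub_nonneg.1 hpos

end Matrix

section Preconditioner

variable {d : ℕ} {A : Matrix (Fin d) (Fin d) ℝ} {ρ : ℝ}

theorem mApply_eq_toEuclideanLin {p : ℕ} (B : Matrix (Fin p) (Fin d) ℝ)
    (v : EuclideanSpace ℝ (Fin d)) : mApply B v = toEuclideanLin B v :=
  rfl

theorem mApply_mApply_inv (hA : IsUnit A) (w : EuclideanSpace ℝ (Fin d)) :
    mApply A (mApply A⁻¹ w) = w := by
  simp [mApply, mulVec_mulVec, mul_nonsing_inv A ((isUnit_iff_isUnit_det A).1 hA)]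

theorem mul_norm_sq_mApply_inv_le_inner (hA : A.IsHermitian) (hρ : 0 < ρ)
    (heig : ∀ i, ρ ≤ hA.eigenvalues i) (w : EuclideanSpace ℝ (Fin d)) :
    ρ * ‖mApply A⁻¹ w‖ ^ 2 ≤ inner ℝ w (mApply A⁻¹ w) := by
  have hunit : IsUnit A :=
    (hA.posDef_iff_eigenvalues_pos.2 fun i ↦ hρ.trans_le (heig i)).isUnit
  have h := mul_norm_sq_le_re_inner_of_algebraMap_le (algebraMap_le_of_le_eigenvalues hA heig)
    (mApply A⁻¹ w)
  rwa [← mApply_eq_toEuclideanLin, mApply_mApply_inv hunit, RCLike.re_to_real] at h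

end Preconditioner

/-- **One-step descent of the adaptive preconditioned update.**
If `F` is differentiable with `L`-Lipschitz gradient, `A` is symmetric with all eigenvalues at
least `ρ > 0`, and `γ ≤ ρ/(2Lη)`, then the update `x⁺ = x − γη A⁻¹ w` satisfies
`F(x⁺) ≤ F(x) + (ηγ/ρ)‖∇F(x) − w‖² − (ρ/(2ηγ))‖x⁺ − x‖²`. -/
theorem one_step_descent_adaptive
    {d : ℕ} (F : EuclideanSpace ℝ (Fin d) → ℝ) (L ρ η γ : ℝ)
    (hF : Differentiable ℝ F)
    (hLip : ∀ x₁ x₂ : EuclideanSpace ℝ (Fin d),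
      ‖gradient F x₁ - gradient F x₂‖ ≤ L * ‖x₁ - x₂‖)
    (A : Matrix (Fin d) (Fin d) ℝ) (hA : A.IsHermitian)
    (hρ : 0 < ρ) (heig : ∀ i, ρ ≤ hA.eigenvalues i)
    (hη : 0 < η) (hγ : 0 < γ) (hγρ : γ ≤ ρ / (2 * L * η))
    (x w : EuclideanSpace ℝ (Fin d)) :
    F (x - (γ * η) • mApply A⁻¹ w) ≤
      F x + (η * γ / ρ) * ‖gradient F x - w‖ ^ 2
        - (ρ / (2 * η * γ)) * ‖(x - (γ * η) • mApply A⁻¹ w) - x‖ ^ 2 := by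
  have hstep : γ * (2 * L * η) ≤ ρ :=
    (le_div_iff₀ ((div_pos_iff_of_pos_left hρ).1 (hγ.trans_le hγρ))).1 hγρ
  rw [mul_comm η γ, mul_assoc 2 η γ, mul_comm η γ]
  exact one_step_descent_adaptive_general hρ (mul_pos hγ hη) (by linarith)
    (fun z _ ↦ hasGradientWithinAt_iff_hasFDerivWithinAt.2
      (hF z).hasGradientAt.hasFDerivAt.hasFDerivWithinAt)
    (fun z _ ↦ hLip z x) (mul_norm_sq_mApply_inv_le_inner hA hρ heig w)
end
end

section
/- Heterogeneity bound for outer gradients (Lemma A.10, first inequality). Let x̄ ∈ ℝ^d and h^1,…,h^M ∈ ℝ^p. Then ∑_{m=1}^M ‖∇f^m(h^m) − (1/M)∑_{j=1}^M ∇f^j(h^j)‖² ≤ 8L_f² ∑_{m=1}^M ‖h^m − g^m(x̄)‖² + 4Mδ_f² + 4ML_f²δ_g². -/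
noncomputable section

/-!
By Jensen's inequality, the spread of a family of vectors about its mean is controlled by the
pairwise squared distances. To compare `F i (x i)` with `F j (x j)`, pass through `F i (u i)`,
`F j (u i)` and `F j (u j)`, where `u` is a family of reference points: the outer two moves cost the
Lipschitz constant times the distances from `x` to `u`, the change of map costs the heterogeneity
of `F`, and the move from `u i` to `u j` costs the Lipschitz constant times the heterogeneity
of `u`.
-/

open Finset

section SquaredNorm

variable {ι E : Type*} [SeminormedAddCommGroup E]

theorem norm_sum_sq_le_card_mul_sum_norm_sq (s : Finset ι) (v : ι → E) :
    ‖∑ i ∈ s, v i‖ ^ 2 ≤ #s * ∑ i ∈ s, ‖v i‖ ^ 2 :=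
  calc
    ‖∑ i ∈ s, v i‖ ^ 2 ≤ (∑ i ∈ s, ‖v i‖) ^ 2 := by gcongr; exact norm_sum_le s v
    _ ≤ #s * ∑ i ∈ s, ‖v i‖ ^ 2 := sq_sum_le_card_mul_sum_sq

theorem norm_add₄_sq_le (a b c d : E) :
    ‖a + b + c + d‖ ^ 2 ≤ 4 * (‖a‖ ^ 2 + ‖b‖ ^ 2 + ‖c‖ ^ 2 + ‖d‖ ^ 2) := by
  simpa [Fin.sum_univ_four] using norm_sum_sq_le_card_mul_sum_norm_sq univ ![a, b, c, d]

end SquaredNorm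

section Mean

variable {ι E : Type*} [SeminormedAddCommGroup E] [NormedSpace ℝ E] {s : Finset ι}

theorem sub_mean_eq_mean_sub (hs : s.Nonempty) (x : E) (v : ι → E) :
    x - (#s : ℝ)⁻¹ • ∑ i ∈ s, v i = (#s : ℝ)⁻¹ • ∑ i ∈ s, (x - v i) := by
  have hcard : (#s : ℝ) ≠ 0 := by exact_mod_cast hs.card_ne_zero
  rw [sum_sub_distrib, sum_const, smul_sub, ← Nat.cast_smul_eq_nsmul ℝ, inv_smul_smul₀ hcard]

theorem norm_sub_mean_sq_le (hs : s.Nonempty) (x : E) (v : ι → E) :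
    ‖x - (#s : ℝ)⁻¹ • ∑ i ∈ s, v i‖ ^ 2 ≤ (#s : ℝ)⁻¹ * ∑ i ∈ s, ‖x - v i‖ ^ 2 := by
  have hcard : (#s : ℝ) ≠ 0 := by exact_mod_cast hs.card_ne_zero
  calc
    ‖x - (#s : ℝ)⁻¹ • ∑ i ∈ s, v i‖ ^ 2
        = (#s : ℝ)⁻¹ ^ 2 * ‖∑ i ∈ s, (x - v i)‖ ^ 2 := by
      rw [sub_mean_eq_mean_sub hs, norm_smul, mul_pow, Real.norm_of_nonneg (by positivity)]
    _ ≤ (#s : ℝ)⁻¹ ^ 2 * (#s * ∑ i ∈ s, ‖x - v i‖ ^ 2) := by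
      gcongr
      exact norm_sum_sq_le_card_mul_sum_norm_sq s _
    _ = (#s : ℝ)⁻¹ * ∑ i ∈ s, ‖x - v i‖ ^ 2 := by field_simp

theorem sum_norm_sub_mean_sq_le_of_pairwise {v : ι → E} {a : ι → ℝ}
    (hva : ∀ i ∈ s, ∀ j ∈ s, ‖v i - v j‖ ^ 2 ≤ a i + a j) :
    ∑ i ∈ s, ‖v i - (#s : ℝ)⁻¹ • ∑ j ∈ s, v j‖ ^ 2 ≤ 2 * ∑ i ∈ s, a i := by
  obtain rfl | hs := s.eq_empty_or_nonempty
  · simp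
  have hcard : (#s : ℝ) ≠ 0 := by exact_mod_cast hs.card_ne_zero
  calc
    ∑ i ∈ s, ‖v i - (#s : ℝ)⁻¹ • ∑ j ∈ s, v j‖ ^ 2
        ≤ ∑ i ∈ s, (#s : ℝ)⁻¹ * ∑ j ∈ s, ‖v i - v j‖ ^ 2 :=
      sum_le_sum fun i _ ↦ norm_sub_mean_sq_le hs (v i) v
    _ ≤ ∑ i ∈ s, (#s : ℝ)⁻¹ * ∑ j ∈ s, (a i + a j) := by
      gcongr with i hi j hj
      exact hva i hi j hj
    _ = 2 * ∑ i ∈ s, a i := by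
      simp only [sum_add_distrib, ← mul_sum, sum_const, nsmul_eq_mul]
      field_simp
      ring

end Mean

section Heterogeneity

variable {ι X E : Type*} [PseudoMetricSpace X] [SeminormedAddCommGroup E]
  {F : ι → X → E} {u : ι → X} {L δF δu : ℝ}

theorem norm_sub_sq_le_of_heterogeneous
    (hF : ∀ i x y, ‖F i x - F i y‖ ≤ L * dist x y)
    (hδF : ∀ i j x, ‖F i x - F j x‖ ≤ δF) (hδu : ∀ i j, dist (u i) (u j) ≤ δu)
    (x : ι → X) (i j : ι) :
    ‖F i (x i) - F j (x j)‖ ^ 2 ≤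
      4 * (L ^ 2 * dist (x i) (u i) ^ 2 + δF ^ 2 + L ^ 2 * δu ^ 2
        + L ^ 2 * dist (x j) (u j) ^ 2) := by
  have hF_sq (k : ι) (y z : X) : ‖F k y - F k z‖ ^ 2 ≤ L ^ 2 * dist y z ^ 2 := by
    rw [← mul_pow]
    gcongr
    exact hF k y z
  calc
    ‖F i (x i) - F j (x j)‖ ^ 2
        = ‖(F i (x i) - F i (u i)) + (F i (u i) - F j (u i)) + (F j (u i) - F j (u j))
            + (F j (u j) - F j (x j))‖ ^ 2 := by simp only [sub_add_sub_cancel]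
    _ ≤ 4 * (‖F i (x i) - F i (u i)‖ ^ 2 + ‖F i (u i) - F j (u i)‖ ^ 2
          + ‖F j (u i) - F j (u j)‖ ^ 2 + ‖F j (u j) - F j (x j)‖ ^ 2) :=
      norm_add₄_sq_le _ _ _ _
    _ ≤ 4 * (L ^ 2 * dist (x i) (u i) ^ 2 + δF ^ 2 + L ^ 2 * dist (u i) (u j) ^ 2
          + L ^ 2 * dist (u j) (x j) ^ 2) := by
      gcongr
      exacts [hF_sq i _ _, hδF i j _, hF_sq j _ _, hF_sq j _ _]
    _ ≤ 4 * (L ^ 2 * dist (x i) (u i) ^ 2 + δF ^ 2 + L ^ 2 * δu ^ 2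
          + L ^ 2 * dist (x j) (u j) ^ 2) := by
      rw [dist_comm (u j)]
      gcongr
      exact hδu i j

theorem heterogeneity_outer_gradients_general [Fintype ι] [NormedSpace ℝ E]
    (hF : ∀ i x y, ‖F i x - F i y‖ ≤ L * dist x y)
    (hδF : ∀ i j x, ‖F i x - F j x‖ ≤ δF) (hδu : ∀ i j, dist (u i) (u j) ≤ δu)
    (x : ι → X) :
    ∑ i, ‖F i (x i) - (Fintype.card ι : ℝ)⁻¹ • ∑ j, F j (x j)‖ ^ 2 ≤
      8 * L ^ 2 * ∑ i, dist (x i) (u i) ^ 2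
        + 4 * (Fintype.card ι : ℝ) * δF ^ 2 + 4 * (Fintype.card ι : ℝ) * L ^ 2 * δu ^ 2 := by
  -- The heterogeneity terms of the pairwise bound are split evenly between the two indices.
  let a (i : ι) : ℝ := 4 * L ^ 2 * dist (x i) (u i) ^ 2 + (2 * δF ^ 2 + 2 * L ^ 2 * δu ^ 2)
  have pairwise_le (i j : ι) : ‖F i (x i) - F j (x j)‖ ^ 2 ≤ a i + a j :=
    (norm_sub_sq_le_of_heterogeneous hF hδF hδu x i j).trans_eq (by ring)
  calc
    ∑ i, ‖F i (x i) - (Fintype.card ι : ℝ)⁻¹ • ∑ j, F j (x j)‖ ^ 2 ≤ 2 * ∑ i, a i :=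
      sum_norm_sub_mean_sq_le_of_pairwise fun i _ j _ ↦ pairwise_le i j
    _ = _ := by
      simp only [a, sum_add_distrib, ← mul_sum, sum_const, card_univ, nsmul_eq_mul]
      ring

end Heterogeneity

/-- **Heterogeneity bound for outer gradients (Lemma A.10, first inequality).**
If each `∇fᵐ` is `Lf`-Lipschitz, the gradients are `δf`-heterogeneous and the inner functions
are `δg`-heterogeneous, then
`∑ₘ ‖∇fᵐ(hᵐ) − (1/M)∑ⱼ ∇fʲ(hʲ)‖² ≤ 8Lf² ∑ₘ ‖hᵐ − gᵐ(x̄)‖² + 4Mδf² + 4MLf²δg²`. -/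
theorem heterogeneity_outer_gradients
    {d p M : ℕ} (hM : 0 < M)
    (g : Fin M → EuclideanSpace ℝ (Fin d) → EuclideanSpace ℝ (Fin p))
    (f : Fin M → EuclideanSpace ℝ (Fin p) → ℝ)
    (df : Fin M → EuclideanSpace ℝ (Fin p) → EuclideanSpace ℝ (Fin p))
    (Lf δf δg : ℝ)
    (hfDeriv : ∀ m y, HasGradientAt (f m) (df m y) y)
    (hfLip : ∀ m y₁ y₂, ‖df m y₁ - df m y₂‖ ≤ Lf * ‖y₁ - y₂‖)
    (hhetf : ∀ m j y, ‖df m y - df j y‖ ≤ δf)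
    (hhetg : ∀ m j x, ‖g m x - g j x‖ ≤ δg)
    (xbar : EuclideanSpace ℝ (Fin d))
    (h : Fin M → EuclideanSpace ℝ (Fin p)) :
    ∑ m, ‖df m (h m) - (M : ℝ)⁻¹ • ∑ j, df j (h j)‖ ^ 2 ≤
      8 * Lf ^ 2 * ∑ m, ‖h m - g m xbar‖ ^ 2
        + 4 * (M : ℝ) * δf ^ 2 + 4 * (M : ℝ) * Lf ^ 2 * δg ^ 2 := by
  simpa only [dist_eq_norm, Fintype.card_fin] using
    heterogeneity_outer_gradients_general (u := (g · xbar))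
      (by simpa only [dist_eq_norm] using hfLip) hhetf
      (fun m j ↦ (dist_eq_norm _ _).trans_le (hhetg m j xbar)) h
end
end
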